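/- Let (X,d) be a proper metric space, N ≥ 1, (λ,ν) ∈ Δ_N × 𝒫₁(X)^N, and let (λⁿ,νⁿ) be a sequence in Δ_N × 𝒫₁(X)^N with ∑ᵢ |λᵢⁿ − λᵢ| + maxᵢ W₁(νᵢⁿ,νᵢ) → 0. If μⁿ ∈ Med_{λⁿ}(νⁿ) for all n, then (μⁿ) admits a subsequence converging in W₁ distance to some μ ∈ Med_λ(ν). In particular Med_λ(ν) is compact for the W₁ distance, and the set-valued map (λ,ν) ↦ Med_λ(ν) has a closed graph for the W₁ distance. -/

import Mathlib

open MeasureTheory Filter Topology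
open scoped ENNReal NNReal

/-- The set of couplings (transport plans): Borel probability measures on `X × X`
with first marginal `μ` and second marginal `ν`. -/
def Couplings {X : Type*} [MeasurableSpace X] (μ ν : Measure X) :
    Set (Measure (X × X)) :=
  {γ | IsProbabilityMeasure γ ∧ γ.map Prod.fst = μ ∧ γ.map Prod.snd = ν}

/-- The Wasserstein distance of order `1` between two measures on a metric space:
the infimum over couplings `γ` of `∫ d(x,y) dγ`. -/
noncomputable def W1 {X : Type*} [MetricSpace X] [MeasurableSpace X]
    (μ ν : Measure X) : ℝ :=
  (⨅ γ ∈ Couplings μ ν, ∫⁻ p, edist p.1 p.2 ∂γ).toReal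

/-- `𝒫₁(X)`: Borel probability measures on `X` with finite first moment. -/
def P1 (X : Type*) [MetricSpace X] [MeasurableSpace X] : Set (Measure X) :=
  {μ | IsProbabilityMeasure μ ∧ ∀ x₀ : X, Integrable (fun x => dist x₀ x) μ}

/-- `λ` belongs to the simplex `Δ_N`: nonnegative weights summing to `1`. -/
def memSimplex {N : ℕ} (l : Fin N → ℝ) : Prop :=
  (∀ i, 0 ≤ l i) ∧ ∑ i, l i = 1

/-- The dispersion functional `μ ↦ ∑ᵢ λᵢ W₁(νᵢ, μ)`. -/
noncomputable def medCost {X : Type*} [MetricSpace X] [MeasurableSpace X] {N : ℕ}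
    (l : Fin N → ℝ) (ν : Fin N → Measure X) (μ : Measure X) : ℝ :=
  ∑ i, l i * W1 (ν i) μ

/-- The set of Wasserstein medians of `ν₁, …, ν_N` with weights `λ`:
minimizers over `𝒫₁(X)` of the dispersion functional. -/
def Med {X : Type*} [MetricSpace X] [MeasurableSpace X] {N : ℕ}
    (l : Fin N → ℝ) (ν : Fin N → Measure X) : Set (Measure X) :=
  {μ | μ ∈ P1 X ∧ ∀ ρ ∈ P1 X, medCost l ν μ ≤ medCost l ν ρ}

/-! ### The extended Wasserstein distance -/

/-- The Wasserstein distance of order `1`, with values in `ℝ≥0∞`. -/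
noncomputable def W1e {X : Type*} [MetricSpace X] [MeasurableSpace X] (μ ν : Measure X) : ℝ≥0∞ :=
  ⨅ γ ∈ Couplings μ ν, ∫⁻ p, edist p.1 p.2 ∂γ

section Couplings

open scoped ProbabilityTheory

variable {X : Type*} [MeasurableSpace X] {μ ν ρ : Measure X}

lemma lintegral_fst_of_mem_couplings {γ : Measure (X × X)} (hγ : γ ∈ Couplings μ ν)
    {f : X → ℝ≥0∞} (hf : Measurable f) : ∫⁻ p, f p.1 ∂γ = ∫⁻ x, f x ∂μ := by
  rw [← hγ.2.1, lintegral_map hf measurable_fst]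

lemma lintegral_snd_of_mem_couplings {γ : Measure (X × X)} (hγ : γ ∈ Couplings μ ν)
    {f : X → ℝ≥0∞} (hf : Measurable f) : ∫⁻ p, f p.2 ∂γ = ∫⁻ x, f x ∂ν := by
  rw [← hγ.2.2, lintegral_map hf measurable_snd]

lemma map_swap_mem_couplings {γ : Measure (X × X)} (hγ : γ ∈ Couplings μ ν) :
    γ.map Prod.swap ∈ Couplings ν μ := by
  obtain ⟨h, h1, h2⟩ := hγ
  refine ⟨Measure.isProbabilityMeasure_map measurable_swap.aemeasurable, ?_, ?_⟩
  · rw [Measure.map_map measurable_fst measurable_swap, ← h2]; rfl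
  · rw [Measure.map_map measurable_snd measurable_swap, ← h1]; rfl

/-- Gluing: two couplings with a common middle marginal come from a measure on the
triple product. -/
lemma exists_gluing [StandardBorelSpace X] [Nonempty X] {γ γ' : Measure (X × X)}
    (hγ : γ ∈ Couplings μ ν) (hγ' : γ' ∈ Couplings ν ρ) :
    ∃ θ : Measure (X × X × X), IsProbabilityMeasure θ ∧
      θ.map (fun q => (q.2.1, q.1)) = γ ∧ θ.map (fun q => (q.1, q.2.2)) = γ' := by
  have hs := map_swap_mem_couplings hγ
  have := hs.1
  have := hγ'.1
  have : IsProbabilityMeasure ν := hγ'.2.1 ▸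
    Measure.isProbabilityMeasure_map measurable_fst.aemeasurable
  set η := (γ.map Prod.swap).condKernel
  set κ := γ'.condKernel
  have e1 : ν ⊗ₘ η = γ.map Prod.swap := by
    conv_rhs => rw [← (γ.map Prod.swap).disintegrate η, Measure.fst, hs.2.1]
  have e2 : ν ⊗ₘ κ = γ' := by
    conv_rhs => rw [← γ'.disintegrate κ, Measure.fst, hγ'.2.1]
  have f1 : (ν ⊗ₘ (η ×ₖ κ)).map (Prod.map id Prod.fst) = γ.map Prod.swap := by
    rw [← Measure.compProd_map measurable_fst, ← ProbabilityTheory.Kernel.fst_eq,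
      ProbabilityTheory.Kernel.fst_prod, e1]
  have f2 : (ν ⊗ₘ (η ×ₖ κ)).map (Prod.map id Prod.snd) = γ' := by
    rw [← Measure.compProd_map measurable_snd, ← ProbabilityTheory.Kernel.snd_eq,
      ProbabilityTheory.Kernel.snd_prod, e2]
  refine ⟨ν ⊗ₘ (η ×ₖ κ), inferInstance, ?_, f2⟩
  have : (fun q : X × X × X => (q.2.1, q.1)) = Prod.swap ∘ Prod.map id Prod.fst := rfl
  rw [this, ← Measure.map_map measurable_swap (by fun_prop), f1,
    Measure.map_map measurable_swap measurable_swap]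
  simp

end Couplings

section Metric

variable {X : Type*} [MetricSpace X] [MeasurableSpace X] {μ ν : Measure X}

lemma W1e_le_of_mem_couplings {γ : Measure (X × X)} (hγ : γ ∈ Couplings μ ν) :
    W1e μ ν ≤ ∫⁻ p, edist p.1 p.2 ∂γ :=
  iInf₂_le γ hγ

lemma W1_nonneg (μ ν : Measure X) : 0 ≤ W1 μ ν := ENNReal.toReal_nonneg

variable [BorelSpace X]

lemma moment_le_add_lintegral (x₀ : X) {γ : Measure (X × X)} (hγ : γ ∈ Couplings ν μ) :
    ∫⁻ x, edist x₀ x ∂μ ≤ ∫⁻ x, edist x₀ x ∂ν + ∫⁻ p, edist p.1 p.2 ∂γ := by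
  rw [← lintegral_snd_of_mem_couplings hγ (by fun_prop),
    ← lintegral_fst_of_mem_couplings hγ (by fun_prop), ← lintegral_add_left (by fun_prop)]
  exact lintegral_mono fun p => edist_triangle _ _ _

lemma moment_le_add_W1e (x₀ : X) (μ ν : Measure X) :
    ∫⁻ x, edist x₀ x ∂μ ≤ ∫⁻ x, edist x₀ x ∂ν + W1e ν μ := by
  rw [W1e, ENNReal.add_iInf₂]
  exact le_iInf₂ fun γ hγ => moment_le_add_lintegral x₀ hγ

lemma mem_P1_iff (x₀ : X) [IsProbabilityMeasure μ] :
    μ ∈ P1 X ↔ ∫⁻ x, edist x₀ x ∂μ ≠ ∞ := by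
  have key : ∀ x : X, Integrable (fun y => dist x y) μ ↔ ∫⁻ y, edist x y ∂μ ≠ ∞ := by
    intro x
    have hm : AEStronglyMeasurable (fun y => dist x y) μ :=
      (continuous_const.dist continuous_id).aestronglyMeasurable
    rw [Integrable, and_iff_right hm,
      hasFiniteIntegral_iff_ofReal (ae_of_all _ fun _ => dist_nonneg), lt_top_iff_ne_top]
    simp only [edist_dist]
  refine ⟨fun h => (key x₀).1 (h.2 x₀), fun h => ⟨inferInstance, fun x => (key x).2 ?_⟩⟩
  have : ∫⁻ y, edist x y ∂μ ≤ edist x x₀ + ∫⁻ y, edist x₀ y ∂μ := by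
    calc ∫⁻ y, edist x y ∂μ ≤ ∫⁻ y, edist x x₀ + edist x₀ y ∂μ :=
          lintegral_mono fun y => edist_triangle _ _ _
      _ = edist x x₀ + ∫⁻ y, edist x₀ y ∂μ := by
          rw [lintegral_add_left (by fun_prop)]; simp
  exact ne_top_of_le_ne_top (ENNReal.add_ne_top.2 ⟨edist_ne_top _ _, h⟩) this

end Metric

section Basic

variable {X : Type*} [MetricSpace X] [SecondCountableTopology X] [MeasurableSpace X]
  [BorelSpace X] {μ ν ρ : Measure X}

lemma W1e_comm (μ ν : Measure X) : W1e μ ν = W1e ν μ := by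
  have key : ∀ μ ν : Measure X, W1e μ ν ≤ W1e ν μ := fun μ ν => le_iInf₂ fun γ hγ => by
    refine (W1e_le_of_mem_couplings (map_swap_mem_couplings hγ)).trans ?_
    rw [lintegral_map (by fun_prop) measurable_swap]
    simp [edist_comm]
  exact (key _ _).antisymm (key _ _)

lemma W1e_triangle [CompleteSpace X] [Nonempty X] (μ ν ρ : Measure X) :
    W1e μ ρ ≤ W1e μ ν + W1e ν ρ := by
  have key : ∀ γ ∈ Couplings μ ν, ∀ γ' ∈ Couplings ν ρ,
      W1e μ ρ ≤ ∫⁻ p, edist p.1 p.2 ∂γ + ∫⁻ p, edist p.1 p.2 ∂γ' := by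
    intro γ hγ γ' hγ'
    obtain ⟨θ, hθ, h1, h2⟩ := exists_gluing hγ hγ'
    have hc : θ.map Prod.snd ∈ Couplings μ ρ := by
      refine ⟨Measure.isProbabilityMeasure_map measurable_snd.aemeasurable, ?_, ?_⟩
      · rw [← hγ.2.1, ← h1, Measure.map_map measurable_fst measurable_snd,
          Measure.map_map measurable_fst (by fun_prop)]
        rfl
      · rw [← hγ'.2.2, ← h2, Measure.map_map measurable_snd measurable_snd,
          Measure.map_map measurable_snd (by fun_prop)]
        rfl
    refine (W1e_le_of_mem_couplings hc).trans ?_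
    rw [← h1, ← h2, lintegral_map (by fun_prop) measurable_snd,
      lintegral_map (by fun_prop) (by fun_prop), lintegral_map (by fun_prop) (by fun_prop),
      ← lintegral_add_left (by fun_prop)]
    exact lintegral_mono fun q => edist_triangle _ _ _
  unfold W1e at key ⊢
  rw [ENNReal.iInf₂_add]
  refine le_iInf₂ fun γ hγ => ?_
  rw [ENNReal.add_iInf₂]
  exact le_iInf₂ fun γ' hγ' => key γ hγ γ' hγ'

/-- Two probability measures with a common part `η` are at distance at most the sum of the first
moments of their remaining parts. -/
lemma W1e_add_le (x₀ : X) (η α β : Measure X) [IsFiniteMeasure η] [IsProbabilityMeasure (η + α)]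
    [IsProbabilityMeasure (η + β)] :
    W1e (η + α) (η + β) ≤ ∫⁻ x, edist x₀ x ∂α + ∫⁻ x, edist x₀ x ∂β := by
  have hα : IsFiniteMeasure α := isFiniteMeasure_of_le (η + α) (Measure.le_add_left le_rfl)
  have hβ : IsFiniteMeasure β := isFiniteMeasure_of_le (η + β) (Measure.le_add_left le_rfl)
  have hαβ : α Set.univ = β Set.univ := by
    have h1 : (η + α) Set.univ = 1 := measure_univ
    have h2 : (η + β) Set.univ = 1 := measure_univ
    rw [Measure.add_apply] at h1 h2
    exact (ENNReal.add_right_inj (measure_ne_top η _)).1 (h1.trans h2.symm)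
  set c := α Set.univ
  have hc : c ≠ ∞ := measure_ne_top _ _
  have smul_eq : ∀ τ : Measure X, τ Set.univ = c → c⁻¹ • c • τ = τ := by
    intro τ hτ
    rcases eq_or_ne c 0 with h0 | h0
    · rw [h0, Measure.measure_univ_eq_zero] at hτ
      simp [hτ]
    · rw [smul_smul, ENNReal.inv_mul_cancel h0 hc, one_smul]
  have hd : Measurable fun x : X => (x, x) := by fun_prop
  set γ : Measure (X × X) := η.map (fun x => (x, x)) + c⁻¹ • α.prod β
  have h1 : γ.map Prod.fst = η + α := by
    rw [Measure.map_add _ _ measurable_fst, Measure.map_map measurable_fst hd,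
      Measure.map_smul, Measure.map_fst_prod, ← hαβ, smul_eq _ rfl]
    congr 1
    exact Measure.map_id
  have h2 : γ.map Prod.snd = η + β := by
    rw [Measure.map_add _ _ measurable_snd, Measure.map_map measurable_snd hd,
      Measure.map_smul, Measure.map_snd_prod, smul_eq _ hαβ.symm]
    congr 1
    exact Measure.map_id
  have hγ : γ ∈ Couplings (η + α) (η + β) := by
    refine ⟨⟨?_⟩, h1, h2⟩
    have : (γ.map Prod.fst) Set.univ = 1 := by rw [h1]; exact measure_univ
    rwa [Measure.map_apply measurable_fst MeasurableSet.univ] at this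
  have hle : ∀ τ : Measure (X × X), ∫⁻ p, edist p.1 p.2 ∂τ ≤
      ∫⁻ x, edist x₀ x ∂(τ.map Prod.fst) + ∫⁻ x, edist x₀ x ∂(τ.map Prod.snd) := by
    intro τ
    rw [lintegral_map (by fun_prop) measurable_fst, lintegral_map (by fun_prop) measurable_snd,
      ← lintegral_add_left (by fun_prop)]
    exact lintegral_mono fun p => edist_triangle_left _ _ _
  refine (W1e_le_of_mem_couplings hγ).trans ?_
  rw [lintegral_add_measure, lintegral_map (by fun_prop) hd]
  simp only [edist_self, lintegral_zero, zero_add]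
  refine (hle _).trans_eq ?_
  rw [Measure.map_smul, Measure.map_fst_prod, ← hαβ, smul_eq _ rfl, Measure.map_smul,
    Measure.map_snd_prod, smul_eq _ hαβ.symm]

lemma W1e_le_moment (x₀ : X) (μ ν : Measure X) [IsProbabilityMeasure μ] [IsProbabilityMeasure ν] :
    W1e μ ν ≤ ∫⁻ x, edist x₀ x ∂μ + ∫⁻ x, edist x₀ x ∂ν := by
  have : IsProbabilityMeasure (0 + μ) := by rwa [zero_add]
  have : IsProbabilityMeasure (0 + ν) := by rwa [zero_add]
  simpa using W1e_add_le x₀ 0 μ ν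

lemma W1e_self (μ : Measure X) [IsProbabilityMeasure μ] : W1e μ μ = 0 := by
  have : IsProbabilityMeasure (μ + 0) := by rwa [add_zero]
  obtain ⟨x₀⟩ := nonempty_of_isProbabilityMeasure μ
  simpa using W1e_add_le x₀ μ 0 0

lemma W1e_ne_top (hμ : μ ∈ P1 X) (hν : ν ∈ P1 X) : W1e μ ν ≠ ∞ := by
  have := hμ.1
  have := hν.1
  obtain ⟨x₀⟩ := nonempty_of_isProbabilityMeasure μ
  exact ne_top_of_le_ne_top
    (ENNReal.add_ne_top.2 ⟨(mem_P1_iff x₀).1 hμ, (mem_P1_iff x₀).1 hν⟩) (W1e_le_moment x₀ μ ν)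

lemma ofReal_W1 (hμ : μ ∈ P1 X) (hν : ν ∈ P1 X) : ENNReal.ofReal (W1 μ ν) = W1e μ ν :=
  ENNReal.ofReal_toReal (W1e_ne_top hμ hν)

lemma W1_self (hμ : μ ∈ P1 X) : W1 μ μ = 0 := by
  have := hμ.1
  exact congrArg ENNReal.toReal (W1e_self μ)

lemma W1_comm (μ ν : Measure X) : W1 μ ν = W1 ν μ := congrArg ENNReal.toReal (W1e_comm μ ν)

lemma W1_triangle [CompleteSpace X] (hμ : μ ∈ P1 X) (hν : ν ∈ P1 X) (hρ : ρ ∈ P1 X) :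
    W1 μ ρ ≤ W1 μ ν + W1 ν ρ := by
  have := hμ.1
  have := nonempty_of_isProbabilityMeasure μ
  refine (ENNReal.toReal_mono (ENNReal.add_ne_top.2 ⟨W1e_ne_top hμ hν, W1e_ne_top hν hρ⟩)
    (W1e_triangle μ ν ρ)).trans_eq ?_
  exact ENNReal.toReal_add (W1e_ne_top hμ hν) (W1e_ne_top hν hρ)

lemma tendsto_W1_of_tendsto [CompleteSpace X] {μs νs : ℕ → Measure X} {c : ℝ}
    (hμs : ∀ n, μs n ∈ P1 X) (hνs : ∀ n, νs n ∈ P1 X) (hν : ν ∈ P1 X)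
    (h : Tendsto (fun n => W1 (νs n) ν) atTop (𝓝 0))
    (hc : Tendsto (fun n => W1 ν (μs n)) atTop (𝓝 c)) :
    Tendsto (fun n => W1 (νs n) (μs n)) atTop (𝓝 c) := by
  refine tendsto_of_tendsto_of_tendsto_of_le_of_le (by simpa using hc.sub h)
    (by simpa using hc.add h) (fun n => ?_) (fun n => ?_)
  · have := W1_triangle hν (hνs n) (hμs n)
    rw [W1_comm ν (νs n)] at this
    simp only
    linarith
  · have := W1_triangle (hνs n) hν (hμs n)
    simp only
    linarith

end Basic

/-! ### Compactness of measures and of couplings -/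

section Compactness

/-- A sequence of probability measures with bounded first moments on a proper space has a weakly
convergent subsequence. -/
lemma exists_subseq_tendsto_of_moment_le {Y : Type*} [MetricSpace Y] [ProperSpace Y]
    [MeasurableSpace Y] [BorelSpace Y] (y₀ : Y) {C : ℝ≥0∞} (hC : C ≠ ∞)
    {P : ℕ → ProbabilityMeasure Y} (hP : ∀ n, ∫⁻ y, edist y₀ y ∂(P n : Measure Y) ≤ C) :
    ∃ (Q : ProbabilityMeasure Y) (φ : ℕ → ℕ), StrictMono φ ∧ Tendsto (P ∘ φ) atTop (𝓝 Q) := by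
  have htight : IsTightMeasureSet
      {((μ : ProbabilityMeasure Y) : Measure Y) | μ ∈ Set.range P} := by
    rw [isTightMeasureSet_iff_exists_isCompact_measure_compl_le]
    intro ε hε
    obtain ⟨R, hR0, hR⟩ : ∃ R : ℝ≥0, R ≠ 0 ∧ C / R ≤ ε := by
      have : Tendsto (fun n : ℕ => C / (n : ℝ≥0∞)) atTop (𝓝 0) := by
        simpa using ENNReal.Tendsto.const_div ENNReal.tendsto_nat_nhds_top (Or.inr hC)
      obtain ⟨n, hn, hn0⟩ := ((this.eventually_le_const hε).and (eventually_gt_atTop 0)).exists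
      exact ⟨n, by exact_mod_cast hn0.ne', by simpa using hn⟩
    refine ⟨Metric.closedBall y₀ R, isCompact_closedBall _ _, ?_⟩
    rintro _ ⟨_, ⟨n, rfl⟩, rfl⟩
    refine le_trans (measure_mono ?_) ((meas_ge_le_lintegral_div (f := fun y => edist y₀ y)
      (by fun_prop) (by simpa using hR0) ENNReal.coe_ne_top).trans
      ((ENNReal.div_le_div_right (hP n) _).trans hR))
    intro y hy
    simp only [Set.mem_compl_iff, Metric.mem_closedBall, not_le] at hy
    rw [Set.mem_ofPred_eq, edist_nndist, ENNReal.coe_le_coe, ← NNReal.coe_le_coe, coe_nndist,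
      dist_comm]
    exact hy.le
  obtain ⟨Q, -, φ, hφ, h⟩ := (isCompact_closure_of_isTightMeasureSet htight).tendsto_subseq
    fun n => subset_closure (Set.mem_range_self n)
  exact ⟨Q, φ, hφ, h⟩

/-- The truncation of a continuous nonnegative function, as a bounded continuous function. -/
noncomputable def truncBCF {Y : Type*} [TopologicalSpace Y] (g : C(Y, ℝ≥0)) (R : ℝ≥0) :
    BoundedContinuousFunction Y ℝ≥0 :=
  BoundedContinuousFunction.mkOfBound ⟨fun y => min (g y) R, by fun_prop⟩ R fun x y => by
    rw [NNReal.dist_eq, abs_le]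
    have hx : ((min (g x) R : ℝ≥0) : ℝ) ≤ R := NNReal.coe_le_coe.2 (min_le_right _ _)
    have hy : ((min (g y) R : ℝ≥0) : ℝ) ≤ R := NNReal.coe_le_coe.2 (min_le_right _ _)
    have hx0 := NNReal.coe_nonneg (min (g x) R)
    have hy0 := NNReal.coe_nonneg (min (g y) R)
    simp only [ContinuousMap.coe_mk]
    constructor <;> linarith

lemma tendsto_lintegral_min {Y : Type*} [TopologicalSpace Y] [MeasurableSpace Y]
    [OpensMeasurableSpace Y] {P : ℕ → ProbabilityMeasure Y} {Q : ProbabilityMeasure Y}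
    (h : Tendsto P atTop (𝓝 Q)) (g : C(Y, ℝ≥0)) (R : ℝ≥0) :
    Tendsto (fun n => ∫⁻ y, min (g y : ℝ≥0∞) R ∂(P n : Measure Y)) atTop
      (𝓝 (∫⁻ y, min (g y : ℝ≥0∞) R ∂(Q : Measure Y))) := by
  simpa [truncBCF] using
    ProbabilityMeasure.tendsto_iff_forall_lintegral_tendsto.1 h (truncBCF g R)

lemma lintegral_le_of_tendsto {Y : Type*} [TopologicalSpace Y] [MeasurableSpace Y]
    [OpensMeasurableSpace Y] {P : ℕ → ProbabilityMeasure Y} {Q : ProbabilityMeasure Y}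
    (h : Tendsto P atTop (𝓝 Q)) (g : C(Y, ℝ≥0)) {c : ℝ≥0∞}
    (hc : Tendsto (fun n => ∫⁻ y, (g y : ℝ≥0∞) ∂(P n : Measure Y)) atTop (𝓝 c)) :
    ∫⁻ y, (g y : ℝ≥0∞) ∂(Q : Measure Y) ≤ c := by
  have hmono : Tendsto (fun R : ℕ => ∫⁻ y, min (g y : ℝ≥0∞) (R : ℝ≥0) ∂(Q : Measure Y)) atTop
      (𝓝 (∫⁻ y, (g y : ℝ≥0∞) ∂(Q : Measure Y))) := by
    refine lintegral_tendsto_of_tendsto_of_monotone (fun n => by fun_prop)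
      (ae_of_all _ fun y m n hmn => min_le_min_left _ (by exact_mod_cast hmn))
      (ae_of_all _ fun y => ?_)
    obtain ⟨N, hN⟩ := exists_nat_ge (g y)
    refine tendsto_atTop_of_eventually_const (i₀ := N) fun n hn => min_eq_left ?_
    exact_mod_cast hN.trans (by exact_mod_cast hn)
  refine le_of_tendsto' hmono fun R => ?_
  exact le_of_tendsto_of_tendsto' (tendsto_lintegral_min h g R) hc
    fun n => lintegral_mono fun y => min_le_left _ _

variable {X : Type*} [MetricSpace X] [ProperSpace X] [MeasurableSpace X] [BorelSpace X]

/-- Near-optimal couplings of a fixed measure with a weakly convergent sequence converge weakly,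
along a subsequence, to a coupling with the limit. -/
lemma exists_subseq_couplings_tendsto {ν : Measure X} (hν : ν ∈ P1 X)
    {P : ℕ → ProbabilityMeasure X} {Q : ProbabilityMeasure X} (hPQ : Tendsto P atTop (𝓝 Q))
    {c : ℝ≥0∞} (hc : c ≠ ∞) (h : Tendsto (fun n => W1e ν (P n)) atTop (𝓝 c)) :
    ∃ (φ : ℕ → ℕ) (G : ℕ → ProbabilityMeasure (X × X)) (H : ProbabilityMeasure (X × X)),
      StrictMono φ ∧ (∀ n, (G n : Measure (X × X)) ∈ Couplings ν (P (φ n))) ∧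
      (H : Measure (X × X)) ∈ Couplings ν Q ∧ Tendsto G atTop (𝓝 H) ∧
      Tendsto (fun n => ∫⁻ p, edist p.1 p.2 ∂(G n : Measure (X × X))) atTop (𝓝 c) := by
  have := hν.1
  obtain ⟨x₀⟩ := nonempty_of_isProbabilityMeasure ν
  have hmom : ∫⁻ x, edist x₀ x ∂ν ≠ ∞ := (mem_P1_iff x₀).1 hν
  have hex : ∃ N, ∀ n, W1e ν (P (n + N)) < c + 1 := by
    obtain ⟨N, hN⟩ := eventually_atTop.1
      (h.eventually_lt_const (ENNReal.lt_add_right hc one_ne_zero))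
    exact ⟨N, fun n => hN _ (by omega)⟩
  obtain ⟨N, hN⟩ := hex
  have hγ : ∀ n, ∃ γ ∈ Couplings ν (P (n + N)),
      ∫⁻ p, edist p.1 p.2 ∂γ < W1e ν (P (n + N)) + ((n : ℝ≥0∞) + 1)⁻¹ := by
    intro n
    have : W1e ν (P (n + N)) < W1e ν (P (n + N)) + ((n : ℝ≥0∞) + 1)⁻¹ :=
      ENNReal.lt_add_right (hN n).ne_top (by simp)
    conv_lhs at this => rw [W1e]
    simpa only [iInf_lt_iff, exists_prop] using this
  choose γ hγ hcost using hγ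
  have hγP : ∀ n, IsProbabilityMeasure (γ n) := fun n => (hγ n).1
  have hlim : Tendsto (fun n => ∫⁻ p, edist p.1 p.2 ∂(γ n)) atTop (𝓝 c) := by
    have h' := h.comp (tendsto_add_atTop_nat N)
    have hinv : Tendsto (fun n : ℕ => ((n : ℝ≥0∞) + 1)⁻¹) atTop (𝓝 0) := by
      have := ENNReal.tendsto_inv_nat_nhds_zero.comp (tendsto_add_atTop_nat 1)
      simpa [Function.comp_def] using this
    refine tendsto_of_tendsto_of_tendsto_of_le_of_le h' (by simpa using h'.add hinv)
      (fun n => W1e_le_of_mem_couplings (hγ n)) (fun n => (hcost n).le)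
  set G : ℕ → ProbabilityMeasure (X × X) := fun n => ⟨γ n, hγP n⟩
  have hb : ∀ n, ∫⁻ p, edist (x₀, x₀) p ∂(G n : Measure (X × X)) ≤
      ∫⁻ x, edist x₀ x ∂ν + (∫⁻ x, edist x₀ x ∂ν + (c + 1 + 1)) := by
    intro n
    calc ∫⁻ p, edist (x₀, x₀) p ∂(γ n)
        ≤ ∫⁻ p, edist x₀ p.1 + edist x₀ p.2 ∂(γ n) := by
          refine lintegral_mono fun p => ?_
          rw [Prod.edist_eq]
          exact max_le le_self_add le_add_self
      _ = ∫⁻ x, edist x₀ x ∂ν + ∫⁻ x, edist x₀ x ∂(P (n + N) : Measure X) := by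
          rw [lintegral_add_left (by fun_prop), lintegral_fst_of_mem_couplings (hγ n)
            (f := fun x => edist x₀ x) (by fun_prop), lintegral_snd_of_mem_couplings (hγ n)
            (f := fun x => edist x₀ x) (by fun_prop)]
      _ ≤ _ := by
          gcongr
          refine (moment_le_add_lintegral x₀ (hγ n)).trans ?_
          gcongr
          refine (hcost n).le.trans ?_
          gcongr
          · exact (hN n).le
          · simp
  obtain ⟨H, φ, hφ, hH⟩ := exists_subseq_tendsto_of_moment_le (x₀, x₀)
    (by simp [ENNReal.add_eq_top, hmom, hc]) hb
  have hfst := ProbabilityMeasure.tendsto_map_of_tendsto_of_continuous _ _ hH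
    (continuous_fst (X := X) (Y := X))
  have hsnd := ProbabilityMeasure.tendsto_map_of_tendsto_of_continuous _ _ hH
    (continuous_snd (X := X) (Y := X))
  have hφN : StrictMono fun n => φ n + N := fun a b hab => Nat.add_lt_add_right (hφ hab) N
  refine ⟨fun n => φ n + N, G ∘ φ, H, hφN, fun n => hγ (φ n), ⟨inferInstance, ?_, ?_⟩, hH,
    hlim.comp hφ.tendsto_atTop⟩
  · have hconst : ∀ n, ((G ∘ φ) n).map
        (continuous_fst (X := X) (Y := X)).measurable.aemeasurable =
        (⟨ν, inferInstance⟩ : ProbabilityMeasure X) :=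
      fun n => Subtype.ext (hγ (φ n)).2.1
    simp only [hconst] at hfst
    exact congrArg ProbabilityMeasure.toMeasure (tendsto_nhds_unique tendsto_const_nhds hfst).symm
  · have hconst : ∀ n, ((G ∘ φ) n).map
        (continuous_snd (X := X) (Y := X)).measurable.aemeasurable = P (φ n + N) :=
      fun n => Subtype.ext (hγ (φ n)).2.2
    simp only [hconst] at hsnd
    exact congrArg ProbabilityMeasure.toMeasure
      (tendsto_nhds_unique hsnd (hPQ.comp hφN.tendsto_atTop))

/-- The distance to a fixed measure is weakly lower semicontinuous. -/
lemma W1e_le_of_tendsto {ν : Measure X} (hν : ν ∈ P1 X)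
    {P : ℕ → ProbabilityMeasure X} {Q : ProbabilityMeasure X} (hPQ : Tendsto P atTop (𝓝 Q))
    {c : ℝ≥0∞} (hc : c ≠ ∞) (h : Tendsto (fun n => W1e ν (P n)) atTop (𝓝 c)) :
    W1e ν Q ≤ c := by
  obtain ⟨φ, G, H, -, -, hH, hGH, hcost⟩ := exists_subseq_couplings_tendsto hν hPQ hc h
  refine (W1e_le_of_mem_couplings hH).trans ?_
  simp only [edist_nndist] at hcost ⊢
  exact lintegral_le_of_tendsto hGH ⟨fun p : X × X => nndist p.1 p.2, by fun_prop⟩ hcost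

end Compactness

/-! ### From weak convergence to convergence in Wasserstein distance -/

section Quantization

universe u

variable {X : Type u} [MetricSpace X]

/-- A finite continuous partition of unity quantizing a proper space, at scale `ε` inside a ball
of radius `2 * R` and with error controlled by the excess distance outside of it. -/
lemma exists_partition_edist_le [ProperSpace X] (x₀ : X) (R : ℝ≥0) {ε : ℝ≥0} (hε : 0 < ε) :
    ∃ (ι : Type u) (_ : Fintype ι) (a : ι → X) (f : ι → BoundedContinuousFunction X ℝ≥0),
      (∀ x, ∑ i, f i x = 1) ∧
      ∀ x, ∑ i, (f i x : ℝ≥0∞) * edist x (a i) ≤ ε + 2 * (edist x₀ x - R) := by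
  classical
  obtain ⟨t, -, htf, htc⟩ := (isCompact_closedBall x₀ ((2 * R : ℝ≥0) : ℝ)).finite_cover_balls
    (e := ε) (by exact_mod_cast hε)
  have : Fintype t := htf.fintype
  let g : Option t → X → ℝ≥0 := fun i x => i.elim (nndist x₀ x - 2 * R) fun y => ε - nndist x y
  have hg : ∀ i, Continuous (g i) := by
    rintro (_ | y)
    · exact (continuous_const.nndist continuous_id).sub continuous_const
    · exact continuous_const.sub (continuous_id.nndist continuous_const)
  have hpos : ∀ x, 0 < ∑ i, g i x := by
    intro x
    suffices ∃ i, 0 < g i x from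
      this.elim fun i hi => hi.trans_le (Finset.single_le_sum (f := fun j => g j x)
        (fun _ _ => zero_le) (Finset.mem_univ i))
    by_cases hx : x ∈ Metric.closedBall x₀ ((2 * R : ℝ≥0) : ℝ)
    · obtain ⟨y, hy, hxy⟩ := Set.mem_iUnion₂.1 (htc hx)
      refine ⟨some ⟨y, hy⟩, tsub_pos_of_lt ?_⟩
      exact_mod_cast (Metric.mem_ball.1 hxy : dist x y < ε)
    · refine ⟨none, tsub_pos_of_lt ?_⟩
      rw [Metric.mem_closedBall, not_le, dist_comm] at hx
      exact_mod_cast hx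
  have hle : ∀ i x, g i x / ∑ j, g j x ≤ 1 := fun i x =>
    div_le_one_of_le₀ (Finset.single_le_sum (f := fun j => g j x) (fun _ _ => zero_le)
      (Finset.mem_univ i)) zero_le
  let f : Option t → BoundedContinuousFunction X ℝ≥0 := fun i =>
    BoundedContinuousFunction.mkOfBound
      ⟨fun x => g i x / ∑ j, g j x,
        (hg i).div (continuous_finsetSum _ fun j _ => hg j) fun x => (hpos x).ne'⟩ 1 fun x y => by
      have hx : ((g i x / ∑ j, g j x : ℝ≥0) : ℝ) ≤ 1 := by exact_mod_cast hle i x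
      have hy : ((g i y / ∑ j, g j y : ℝ≥0) : ℝ) ≤ 1 := by exact_mod_cast hle i y
      have hx0 := NNReal.coe_nonneg (g i x / ∑ j, g j x)
      have hy0 := NNReal.coe_nonneg (g i y / ∑ j, g j y)
      rw [NNReal.dist_eq, abs_le]
      simp only [ContinuousMap.coe_mk]
      constructor <;> linarith
  have hf : ∀ i x, f i x = g i x / ∑ j, g j x := fun _ _ => rfl
  have hsum : ∀ x, ∑ i, f i x = 1 := fun x => by
    simp only [hf]
    rw [← Finset.sum_div, div_self (hpos x).ne']
  refine ⟨Option t, inferInstance, fun i => i.elim x₀ fun y => y, f, hsum, fun x => ?_⟩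
  calc ∑ i : Option t, (f i x : ℝ≥0∞) * edist x (i.elim x₀ fun y => y)
      ≤ ∑ i : Option t, (f i x : ℝ≥0∞) * (ε + 2 * (edist x₀ x - R)) := by
        refine Finset.sum_le_sum fun i _ => ?_
        rcases eq_or_ne (g i x) 0 with h0 | h0
        · simp [hf, h0]
        gcongr
        rcases i with _ | y
        · have h : 2 * R < nndist x₀ x := tsub_pos_iff_lt.1 (pos_iff_ne_zero.2 h0)
          refine le_add_left ?_
          simp only [Option.elim_none]
          rw [edist_comm, edist_nndist]
          norm_cast
          rw [mul_tsub, two_mul (nndist x₀ x), add_tsub_assoc_of_le h.le]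
          exact le_self_add
        · have h : nndist x y < ε := tsub_pos_iff_lt.1 (pos_iff_ne_zero.2 h0)
          refine le_add_right ?_
          simp only [Option.elim_some]
          rw [edist_nndist]
          exact_mod_cast h.le
    _ = ε + 2 * (edist x₀ x - R) := by
        rw [← Finset.sum_mul]
        have : ∑ i, (f i x : ℝ≥0∞) = 1 := by exact_mod_cast hsum x
        rw [this, one_mul]

variable [MeasurableSpace X] [BorelSpace X]

/-- Pushing a measure to finitely many atoms along a partition of unity. -/
noncomputable def quantize {ι : Type*} [Fintype ι] (a : ι → X)
    (f : ι → BoundedContinuousFunction X ℝ≥0) (μ : Measure X) : Measure X :=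
  ∑ i, (∫⁻ x, f i x ∂μ) • Measure.dirac (a i)

lemma isProbabilityMeasure_quantize {ι : Type*} [Fintype ι] (a : ι → X)
    {f : ι → BoundedContinuousFunction X ℝ≥0} (hf : ∀ x, ∑ i, f i x = 1)
    (μ : Measure X) [IsProbabilityMeasure μ] : IsProbabilityMeasure (quantize a f μ) := by
  have hsum : ∀ x, ∑ i, (f i x : ℝ≥0∞) = 1 := fun x => by exact_mod_cast hf x
  constructor
  rw [quantize, Measure.finsetSum_apply]
  simp only [Measure.smul_apply, measure_univ, smul_eq_mul, mul_one]
  rw [← lintegral_finsetSum _ fun i _ => by fun_prop]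
  simp [hsum]

variable [SecondCountableTopology X]

lemma W1e_quantize_le {ι : Type*} [Fintype ι] (a : ι → X)
    {f : ι → BoundedContinuousFunction X ℝ≥0} (hf : ∀ x, ∑ i, f i x = 1)
    (μ : Measure X) [IsProbabilityMeasure μ] :
    W1e μ (quantize a f μ) ≤ ∫⁻ x, ∑ i, (f i x : ℝ≥0∞) * edist x (a i) ∂μ := by
  have hfm : ∀ i, Measurable fun x => (f i x : ℝ≥0∞) := fun i => by fun_prop
  have hpm : ∀ i, Measurable fun x : X => (x, a i) := fun i => by fun_prop
  have hsum : ∀ x, ∑ i, (f i x : ℝ≥0∞) = 1 := fun x => by exact_mod_cast hf x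
  set γ : Measure (X × X) :=
    ∑ i, (μ.withDensity fun x => (f i x : ℝ≥0∞)).map fun x => (x, a i)
  have h1 : γ.map Prod.fst = μ := by
    ext s hs
    rw [Measure.map_apply measurable_fst hs, Measure.finsetSum_apply]
    simp_rw [Measure.map_apply (hpm _) (measurable_fst hs)]
    have : ∀ i, (fun x : X => (x, a i)) ⁻¹' (Prod.fst ⁻¹' s) = s := fun i => rfl
    simp_rw [this, withDensity_apply _ hs]
    rw [← lintegral_finsetSum _ fun i _ => hfm i]
    simp [hsum]
  have h2 : γ.map Prod.snd = quantize a f μ := by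
    ext s hs
    rw [Measure.map_apply measurable_snd hs, Measure.finsetSum_apply, quantize,
      Measure.finsetSum_apply]
    refine Finset.sum_congr rfl fun i _ => ?_
    rw [Measure.map_apply (hpm _) (measurable_snd hs), Measure.smul_apply,
      Measure.dirac_apply' _ hs]
    by_cases hi : a i ∈ s
    · have : (fun x : X => (x, a i)) ⁻¹' (Prod.snd ⁻¹' s) = Set.univ := by ext; simp [hi]
      simp [this, hi]
    · have : (fun x : X => (x, a i)) ⁻¹' (Prod.snd ⁻¹' s) = ∅ := by ext; simp [hi]
      simp [this, hi]
  have hγ : γ ∈ Couplings μ (quantize a f μ) := by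
    refine ⟨⟨?_⟩, h1, h2⟩
    have : (γ.map Prod.fst) Set.univ = 1 := by rw [h1]; exact measure_univ
    rwa [Measure.map_apply measurable_fst MeasurableSet.univ] at this
  refine (W1e_le_of_mem_couplings hγ).trans_eq ?_
  rw [lintegral_finsetSum_measure, lintegral_finsetSum _ fun i _ => by fun_prop]
  refine Finset.sum_congr rfl fun i _ => ?_
  rw [lintegral_map (by fun_prop) (hpm i),
    lintegral_withDensity_eq_lintegral_mul _ (hfm i) (by fun_prop)]
  rfl

lemma W1e_quantize_quantize_le {ι : Type*} [Fintype ι] (a : ι → X)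
    {f : ι → BoundedContinuousFunction X ℝ≥0} (hf : ∀ x, ∑ i, f i x = 1) (x₀ : X)
    (μ ν : Measure X) [IsProbabilityMeasure μ] [IsProbabilityMeasure ν] :
    W1e (quantize a f μ) (quantize a f ν) ≤
      ∑ i, (∫⁻ x, f i x ∂μ - ∫⁻ x, f i x ∂ν) * edist x₀ (a i) +
      ∑ i, (∫⁻ x, f i x ∂ν - ∫⁻ x, f i x ∂μ) * edist x₀ (a i) := by
  have split : ∀ u v : ι → ℝ≥0∞, ∑ i, u i • Measure.dirac (a i) =
      ∑ i, min (u i) (v i) • Measure.dirac (a i) + ∑ i, (u i - v i) • Measure.dirac (a i) := by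
    intro u v
    rw [← Finset.sum_add_distrib]
    refine Finset.sum_congr rfl fun i _ => ?_
    rw [← add_smul, add_comm, tsub_add_min]
  set u : ι → ℝ≥0∞ := fun i => ∫⁻ x, f i x ∂μ
  set v : ι → ℝ≥0∞ := fun i => ∫⁻ x, f i x ∂ν
  set η : Measure X := ∑ i, min (u i) (v i) • Measure.dirac (a i)
  have hu : quantize a f μ = η + ∑ i, (u i - v i) • Measure.dirac (a i) := split u v
  have hv : quantize a f ν = η + ∑ i, (v i - u i) • Measure.dirac (a i) := by
    simp only [η, min_comm (u _)]
    exact split v u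
  have hPμ := isProbabilityMeasure_quantize a hf μ
  have hPν := isProbabilityMeasure_quantize a hf ν
  rw [hu] at hPμ ⊢
  rw [hv] at hPν ⊢
  have : IsFiniteMeasure η :=
    isFiniteMeasure_of_le (η + ∑ i, (u i - v i) • Measure.dirac (a i)) (Measure.le_add_right le_rfl)
  refine (W1e_add_le x₀ _ _ _).trans_eq ?_
  simp [lintegral_finsetSum_measure, u, v]

lemma tendsto_W1e_quantize {ι : Type*} [Fintype ι] (a : ι → X)
    {f : ι → BoundedContinuousFunction X ℝ≥0} (hf : ∀ x, ∑ i, f i x = 1)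
    {P : ℕ → ProbabilityMeasure X} {Q : ProbabilityMeasure X} (h : Tendsto P atTop (𝓝 Q)) :
    Tendsto (fun n => W1e (quantize a f (P n)) (quantize a f Q)) atTop (𝓝 0) := by
  obtain ⟨x₀⟩ := nonempty_of_isProbabilityMeasure (Q : Measure X)
  have hw := ProbabilityMeasure.tendsto_iff_forall_lintegral_tendsto.1 h
  have hfin : ∀ i, ∫⁻ x, f i x ∂(Q : Measure X) ≠ ∞ := fun i =>
    ((f i).lintegral_lt_top_of_nnreal _).ne
  have h1 : ∀ i, Tendsto (fun n => (∫⁻ x, f i x ∂(P n : Measure X) -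
      ∫⁻ x, f i x ∂(Q : Measure X)) * edist x₀ (a i)) atTop (𝓝 0) := fun i => by
    have := ENNReal.Tendsto.mul_const (b := edist x₀ (a i))
      (ENNReal.Tendsto.sub (hw (f i)) (tendsto_const_nhds
        (x := ∫⁻ x, f i x ∂(Q : Measure X))) (Or.inl (hfin i)))
      (Or.inr (edist_ne_top _ _))
    simpa using this
  have h2 : ∀ i, Tendsto (fun n => (∫⁻ x, f i x ∂(Q : Measure X) -
      ∫⁻ x, f i x ∂(P n : Measure X)) * edist x₀ (a i)) atTop (𝓝 0) := fun i => by
    have := ENNReal.Tendsto.mul_const (b := edist x₀ (a i))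
      (ENNReal.Tendsto.sub tendsto_const_nhds (hw (f i)) (Or.inl (hfin i)))
      (Or.inr (edist_ne_top _ _))
    simpa using this
  refine tendsto_of_tendsto_of_tendsto_of_le_of_le tendsto_const_nhds ?_ (fun _ => zero_le)
    (fun n => W1e_quantize_quantize_le a hf x₀ _ _)
  simpa using (tendsto_finsetSum Finset.univ fun i _ => h1 i).add
    (tendsto_finsetSum Finset.univ fun i _ => h2 i)

end Quantization

section Tails

lemma tendsto_lintegral_sub_atTop {Y : Type*} [MeasurableSpace Y] {μ : Measure Y}
    {g : Y → ℝ≥0∞} (hg : Measurable g) (hfin : ∫⁻ y, g y ∂μ ≠ ∞) :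
    Tendsto (fun R : ℕ => ∫⁻ y, (g y - (R : ℝ≥0)) ∂μ) atTop (𝓝 0) := by
  have := tendsto_lintegral_of_dominated_convergence (μ := μ) (f := fun _ => 0)
    (F := fun (R : ℕ) y => g y - (R : ℝ≥0)) g (fun n => by fun_prop)
    (fun n => ae_of_all _ fun y => tsub_le_self) hfin ?_
  · simpa using this
  filter_upwards [ae_lt_top hg hfin] with y hy
  obtain ⟨N, hN⟩ := ENNReal.exists_nat_gt hy.ne
  refine tendsto_atTop_of_eventually_const (i₀ := N) fun n hn => tsub_eq_zero_of_le ?_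
  refine hN.le.trans ?_
  exact_mod_cast hn

lemma lintegral_sub_add_lintegral_min {Y : Type*} [MeasurableSpace Y] (μ : Measure Y)
    {g : Y → ℝ≥0∞} (hg : Measurable g) (R : ℝ≥0∞) :
    ∫⁻ y, (g y - R) ∂μ + ∫⁻ y, min (g y) R ∂μ = ∫⁻ y, g y ∂μ := by
  rw [← lintegral_add_left (by fun_prop)]
  exact lintegral_congr fun y => tsub_add_min

lemma lintegral_edist_sub_le {X : Type*} [MetricSpace X] [MeasurableSpace X]
    [BorelSpace X] (x₀ : X) {μ ν : Measure X} {γ : Measure (X × X)}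
    (hγ : γ ∈ Couplings ν μ) (R : ℝ≥0∞) :
    ∫⁻ x, (edist x₀ x - (R + R)) ∂μ ≤
      ∫⁻ x, (edist x₀ x - R) ∂ν + ∫⁻ p, (edist p.1 p.2 - R) ∂γ := by
  rw [← lintegral_snd_of_mem_couplings hγ (f := fun x => edist x₀ x - (R + R)) (by fun_prop),
    ← lintegral_fst_of_mem_couplings hγ (f := fun x => edist x₀ x - R) (by fun_prop),
    ← lintegral_add_left (by fun_prop)]
  refine lintegral_mono fun p => ?_
  exact (tsub_le_tsub_right (edist_triangle x₀ p.1 p.2) _).trans add_tsub_add_le_tsub_add_tsub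

variable {X : Type*} [MetricSpace X] [ProperSpace X] [MeasurableSpace X] [BorelSpace X]

/-- Weak convergence together with uniformly small first-moment tails implies convergence in
Wasserstein distance. -/
lemma tendsto_W1e_of_tails {P : ℕ → ProbabilityMeasure X} {Q : ProbabilityMeasure X}
    (h : Tendsto P atTop (𝓝 Q)) (x₀ : X)
    (htail : ∀ ε : ℝ≥0, 0 < ε → ∃ R : ℝ≥0,
      (∀ᶠ n in atTop, ∫⁻ x, (edist x₀ x - R) ∂(P n : Measure X) ≤ ε) ∧
      ∫⁻ x, (edist x₀ x - R) ∂(Q : Measure X) ≤ ε) :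
    Tendsto (fun n => W1e (P n : Measure X) Q) atTop (𝓝 0) := by
  have : Nonempty X := ⟨x₀⟩
  rw [ENNReal.tendsto_nhds_zero]
  intro δ hδ
  obtain ⟨ε, hε, hεδ⟩ : ∃ ε : ℝ≥0, 0 < ε ∧ 7 * (ε : ℝ≥0∞) ≤ δ := by
    obtain ⟨e, he0, he⟩ := ENNReal.lt_iff_exists_nnreal_btwn.1 hδ
    refine ⟨e / 7, div_pos (by exact_mod_cast he0) (by norm_num), le_trans ?_ he.le⟩
    have : 7 * (e / 7) = e := mul_div_cancel₀ e (by norm_num)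
    exact_mod_cast this.le
  obtain ⟨R, hR, hRQ⟩ := htail ε hε
  obtain ⟨ι, _, a, f, hf, hfa⟩ := exists_partition_edist_le x₀ R hε
  have hquant : ∀ μ : ProbabilityMeasure X, ∫⁻ x, (edist x₀ x - R) ∂(μ : Measure X) ≤ ε →
      W1e μ (quantize a f μ) ≤ 3 * ε := by
    intro μ hμ
    calc W1e μ (quantize a f μ) ≤ ∫⁻ x, ε + 2 * (edist x₀ x - R) ∂(μ : Measure X) :=
          (W1e_quantize_le a hf _).trans (lintegral_mono hfa)
      _ = ε + 2 * ∫⁻ x, (edist x₀ x - R) ∂(μ : Measure X) := by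
          rw [lintegral_add_left (by fun_prop), lintegral_const_mul _ (by fun_prop)]
          simp
      _ ≤ ε + 2 * ε := by gcongr
      _ = 3 * ε := by ring
  have hconv := ENNReal.tendsto_nhds_zero.1 (tendsto_W1e_quantize a hf h) ε (by exact_mod_cast hε)
  filter_upwards [hR, hconv] with n hn hn'
  have hP := hquant (P n) hn
  have hQ := hquant Q hRQ
  rw [W1e_comm] at hQ
  refine le_trans ?_ hεδ
  have h7 : (7 : ℝ≥0∞) * ε = 3 * ε + (ε + 3 * ε) := by ring
  rw [h7]
  exact (W1e_triangle _ _ _).trans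
    (add_le_add hP ((W1e_triangle _ _ _).trans (add_le_add hn' hQ)))

/-- If a sequence converges weakly and the distances to one fixed measure converge to that of the
limit, then a subsequence converges in Wasserstein distance. -/
lemma exists_subseq_tendsto_W1e {ν : Measure X} (hν : ν ∈ P1 X)
    {P : ℕ → ProbabilityMeasure X} {Q : ProbabilityMeasure X} (hQ : (Q : Measure X) ∈ P1 X)
    (hPQ : Tendsto P atTop (𝓝 Q)) (h : Tendsto (fun n => W1e ν (P n)) atTop (𝓝 (W1e ν Q))) :
    ∃ φ : ℕ → ℕ, StrictMono φ ∧ Tendsto (fun n => W1e (P (φ n) : Measure X) Q) atTop (𝓝 0) := by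
  have := hν.1
  obtain ⟨x₀⟩ := nonempty_of_isProbabilityMeasure ν
  obtain ⟨φ, G, H, hφ, hG, hH, hGH, hcost⟩ :=
    exists_subseq_couplings_tendsto hν hPQ (W1e_ne_top hν hQ) h
  refine ⟨φ, hφ, tendsto_W1e_of_tails (hPQ.comp hφ.tendsto_atTop) x₀ fun ε hε => ?_⟩
  have hle : ∫⁻ p, edist p.1 p.2 ∂(H : Measure (X × X)) ≤ W1e ν Q := by
    simp only [edist_nndist] at hcost ⊢
    exact lintegral_le_of_tendsto hGH ⟨fun p : X × X => nndist p.1 p.2, by fun_prop⟩ hcost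
  have heq : W1e ν Q = ∫⁻ p, edist p.1 p.2 ∂(H : Measure (X × X)) :=
    (W1e_le_of_mem_couplings hH).antisymm hle
  have hfin : ∫⁻ p, edist p.1 p.2 ∂(H : Measure (X × X)) ≠ ∞ := heq ▸ W1e_ne_top hν hQ
  have hε2 : (0 : ℝ≥0∞) < (ε / 2 : ℝ≥0) := by exact_mod_cast half_pos hε
  obtain ⟨R, hR1, hR2⟩ := ((tendsto_lintegral_sub_atTop (μ := ν) (g := fun x => edist x₀ x)
      (by fun_prop) ((mem_P1_iff x₀).1 hν)).eventually_lt_const hε2).and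
    ((tendsto_lintegral_sub_atTop (μ := (H : Measure (X × X))) (g := fun p => edist p.1 p.2)
      (by fun_prop) hfin).eventually_lt_const hε2) |>.exists
  have hhalf : ((ε / 2 : ℝ≥0) : ℝ≥0∞) + (ε / 2 : ℝ≥0) = ε := by
    rw [← ENNReal.coe_add, add_halves]
  have hlim : Tendsto (fun n => ∫⁻ p, (edist p.1 p.2 - (R : ℝ≥0)) ∂(G n : Measure (X × X))) atTop
      (𝓝 (∫⁻ p, (edist p.1 p.2 - (R : ℝ≥0)) ∂(H : Measure (X × X)))) := by
    have hmin : Tendsto (fun n => ∫⁻ p, min (edist p.1 p.2) (R : ℝ≥0) ∂(G n : Measure (X × X)))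
        atTop (𝓝 (∫⁻ p, min (edist p.1 p.2) (R : ℝ≥0) ∂(H : Measure (X × X)))) := by
      simp only [edist_nndist]
      exact tendsto_lintegral_min hGH ⟨fun p : X × X => nndist p.1 p.2, by fun_prop⟩ R
    have hmin_ne : ∀ K : ProbabilityMeasure (X × X),
        ∫⁻ p, min (edist p.1 p.2) (R : ℝ≥0) ∂(K : Measure (X × X)) ≠ ∞ := fun K =>
      ne_top_of_le_ne_top (ENNReal.coe_ne_top (r := R))
        ((lintegral_mono fun p => min_le_right _ _).trans_eq (by simp))
    have hsub : ∀ K : ProbabilityMeasure (X × X),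
        ∫⁻ p, (edist p.1 p.2 - (R : ℝ≥0)) ∂(K : Measure (X × X)) =
          ∫⁻ p, edist p.1 p.2 ∂(K : Measure (X × X)) -
            ∫⁻ p, min (edist p.1 p.2) (R : ℝ≥0) ∂(K : Measure (X × X)) := fun K =>
      ENNReal.eq_sub_of_add_eq (hmin_ne K) (lintegral_sub_add_lintegral_min _ (by fun_prop) _)
    simp only [hsub]
    exact ENNReal.Tendsto.sub (heq ▸ hcost) hmin (Or.inr (hmin_ne H))
  refine ⟨R + R, ?_, ?_⟩
  · filter_upwards [hlim.eventually_lt_const hR2] with n hn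
    rw [← hhalf, ENNReal.coe_add]
    exact (lintegral_edist_sub_le x₀ (hG n) _).trans (add_le_add hR1.le hn.le)
  · rw [← hhalf, ENNReal.coe_add]
    exact (lintegral_edist_sub_le x₀ hH _).trans (add_le_add hR1.le hR2.le)

end Tails

/-! ### Medians -/

section Medians

variable {X : Type*} [MetricSpace X] [ProperSpace X] [MeasurableSpace X] [BorelSpace X]
  {N : ℕ} {l : Fin N → ℝ} {ν : Fin N → Measure X} {l' : ℕ → Fin N → ℝ}
  {ν' : ℕ → Fin N → Measure X} {μs : ℕ → Measure X}

lemma tendsto_medCost (hν : ∀ i, ν i ∈ P1 X) (hν' : ∀ n i, ν' n i ∈ P1 X)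
    (hμs : ∀ n, μs n ∈ P1 X) (hl' : ∀ i, Tendsto (fun n => l' n i) atTop (𝓝 (l i)))
    (hW : ∀ i, Tendsto (fun n => W1 (ν' n i) (ν i)) atTop (𝓝 0)) {c : Fin N → ℝ}
    (hc : ∀ i, Tendsto (fun n => W1 (ν i) (μs n)) atTop (𝓝 (c i))) :
    Tendsto (fun n => medCost (l' n) (ν' n) (μs n)) atTop (𝓝 (∑ i, l i * c i)) :=
  tendsto_finsetSum _ fun i _ =>
    (hl' i).mul (tendsto_W1_of_tendsto hμs (fun n => hν' n i) (hν i) (hW i) (hc i))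

lemma sum_mul_le_medCost_of_tendsto (hν : ∀ i, ν i ∈ P1 X) (hν' : ∀ n i, ν' n i ∈ P1 X)
    (hμs : ∀ n, μs n ∈ Med (l' n) (ν' n)) (hl' : ∀ i, Tendsto (fun n => l' n i) atTop (𝓝 (l i)))
    (hW : ∀ i, Tendsto (fun n => W1 (ν' n i) (ν i)) atTop (𝓝 0)) {c : Fin N → ℝ}
    (hc : ∀ i, Tendsto (fun n => W1 (ν i) (μs n)) atTop (𝓝 (c i)))
    {ρ : Measure X} (hρ : ρ ∈ P1 X) : ∑ i, l i * c i ≤ medCost l ν ρ :=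
  le_of_tendsto_of_tendsto' (tendsto_medCost hν hν' (fun n => (hμs n).1) hl' hW hc)
    (tendsto_medCost hν hν' (fun _ => hρ) hl' hW fun _ => tendsto_const_nhds)
    fun n => (hμs n).2 ρ hρ

lemma W1_le_two_mul_medCost (hl : memSimplex l) (hν : ∀ i, ν i ∈ P1 X) {μ ρ : Measure X}
    (hμ : μ ∈ Med l ν) (hρ : ρ ∈ P1 X) : W1 ρ μ ≤ 2 * medCost l ν ρ := by
  calc W1 ρ μ = ∑ i, l i * W1 ρ μ := by rw [← Finset.sum_mul, hl.2, one_mul]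
    _ ≤ ∑ i, (l i * W1 (ν i) ρ + l i * W1 (ν i) μ) := by
        refine Finset.sum_le_sum fun i _ => ?_
        rw [← mul_add]
        refine mul_le_mul_of_nonneg_left ?_ (hl.1 i)
        exact (W1_triangle hρ (hν i) hμ.1).trans_eq (by rw [W1_comm ρ])
    _ = medCost l ν ρ + medCost l ν μ := Finset.sum_add_distrib
    _ ≤ 2 * medCost l ν ρ := by linarith [hμ.2 ρ hρ]

/-- A sequence at bounded Wasserstein distance from finitely many fixed measures has a weakly
convergent subsequence along which these distances converge; they are lower semicontinuous at the
limit. -/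
lemma exists_subseq_tendsto_of_W1_le [NeZero N] (hν : ∀ i, ν i ∈ P1 X)
    {P : ℕ → ProbabilityMeasure X}
    (hP : ∀ n, (P n : Measure X) ∈ P1 X) {B : ℝ} (hB : ∀ n i, W1 (ν i) (P n) ≤ B) :
    ∃ (Q : ProbabilityMeasure X) (φ : ℕ → ℕ) (c : Fin N → ℝ), StrictMono φ ∧
      (Q : Measure X) ∈ P1 X ∧ Tendsto (P ∘ φ) atTop (𝓝 Q) ∧
      ∀ i, Tendsto (fun n => W1 (ν i) (P (φ n))) atTop (𝓝 (c i)) ∧ W1 (ν i) Q ≤ c i := by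
  have hprob : ∀ i, IsProbabilityMeasure (ν i) := fun i => (hν i).1
  obtain ⟨x₀⟩ := nonempty_of_isProbabilityMeasure (ν 0)
  have hmom := (mem_P1_iff x₀).1 (hν 0)
  obtain ⟨Q, φ₁, hφ₁, hQ⟩ := exists_subseq_tendsto_of_moment_le x₀
    (ENNReal.add_ne_top.2 ⟨hmom, ENNReal.ofReal_ne_top (r := B)⟩) (P := P) fun n =>
      (moment_le_add_W1e x₀ (P n : Measure X) (ν 0)).trans <| by
        rw [← ofReal_W1 (hν 0) (hP n)]
        exact add_le_add le_rfl (ENNReal.ofReal_le_ofReal (hB n 0))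
  obtain ⟨c, -, φ₂, hφ₂, hc⟩ := tendsto_subseq_of_bounded
    (Metric.isBounded_Icc (0 : Fin N → ℝ) fun _ => B)
    (x := fun n i => W1 (ν i) (P (φ₁ n))) fun n => ⟨fun i => W1_nonneg _ _, fun i => hB _ i⟩
  have hQ' : Tendsto (fun n => P (φ₁ (φ₂ n))) atTop (𝓝 Q) := hQ.comp hφ₂.tendsto_atTop
  rw [tendsto_pi_nhds] at hc
  have hlsc : ∀ i, W1e (ν i) Q ≤ ENNReal.ofReal (c i) := fun i => by
    refine W1e_le_of_tendsto (hν i) hQ' ENNReal.ofReal_ne_top ?_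
    simp only [← ofReal_W1 (hν i) (hP _)]
    exact ENNReal.tendsto_ofReal (hc i)
  have hQ1 : (Q : Measure X) ∈ P1 X := (mem_P1_iff x₀).2 <|
    ne_top_of_le_ne_top (ENNReal.add_ne_top.2 ⟨hmom, ENNReal.ofReal_ne_top⟩)
      ((moment_le_add_W1e x₀ (Q : Measure X) (ν 0)).trans (add_le_add le_rfl (hlsc 0)))
  exact ⟨Q, φ₁ ∘ φ₂, c, hφ₁.comp hφ₂, hQ1, hQ', fun i => ⟨hc i,
    ENNReal.toReal_le_of_le_ofReal (ge_of_tendsto' (hc i) fun n => W1_nonneg _ _) (hlsc i)⟩⟩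

lemma exists_subseq_tendsto_W1_mem_Med [NeZero N] (hl : memSimplex l) (hν : ∀ i, ν i ∈ P1 X)
    (hl₁ : ∀ n, memSimplex (l' n)) (hν' : ∀ n i, ν' n i ∈ P1 X)
    (hμs : ∀ n, μs n ∈ Med (l' n) (ν' n)) (hl' : ∀ i, Tendsto (fun n => l' n i) atTop (𝓝 (l i)))
    (hW : ∀ i, Tendsto (fun n => W1 (ν' n i) (ν i)) atTop (𝓝 0)) :
    ∃ φ : ℕ → ℕ, StrictMono φ ∧ ∃ μ ∈ Med l ν,
      Tendsto (fun n => W1 (μs (φ n)) μ) atTop (𝓝 0) := by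
  obtain ⟨P, rfl⟩ : ∃ P : ℕ → ProbabilityMeasure X, (fun n => (P n : Measure X)) = μs :=
    ⟨fun n => ⟨μs n, (hμs n).1.1⟩, rfl⟩
  have hbdd : ∀ i, ∃ B, ∀ n, W1 (ν i) (P n) ≤ B := fun i => by
    obtain ⟨B, hB⟩ := (tendsto_medCost hν hν' (fun _ => hν i) hl' hW
      fun _ => tendsto_const_nhds).bddAbove_range
    refine ⟨2 * B, fun n => (W1_le_two_mul_medCost (hl₁ n) (hν' n) (hμs n) (hν i)).trans ?_⟩
    linarith [hB (Set.mem_range_self n)]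
  choose B hB using hbdd
  obtain ⟨Q, φ, c, hφ, hQ, hPQ, hc⟩ := exists_subseq_tendsto_of_W1_le hν
    (fun n => (hμs n).1) (B := ⨆ i, B i) fun n i =>
      (hB i n).trans (le_ciSup (Set.finite_range B).bddAbove i)
  have hle : ∀ ρ ∈ P1 X, ∑ i, l i * c i ≤ medCost l ν ρ := fun ρ hρ =>
    sum_mul_le_medCost_of_tendsto hν (fun n => hν' (φ n)) (fun n => hμs (φ n))
      (fun i => (hl' i).comp hφ.tendsto_atTop) (fun i => (hW i).comp hφ.tendsto_atTop)
      (fun i => (hc i).1) hρ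
  have hterm : ∀ i, l i * W1 (ν i) Q ≤ l i * c i := fun i =>
    mul_le_mul_of_nonneg_left (hc i).2 (hl.1 i)
  obtain ⟨i, hi⟩ : ∃ i, l i ≠ 0 := by
    by_contra! h
    simpa [h] using hl.2
  have hci : c i = W1 (ν i) Q := mul_left_cancel₀ hi <| Eq.symm <|
    (Finset.sum_eq_sum_iff_of_le fun i _ => hterm i).1
      ((Finset.sum_le_sum fun i _ => hterm i).antisymm (hle Q hQ)) i (Finset.mem_univ i)
  have hconv : Tendsto (fun n => W1e (ν i) (P (φ n))) atTop (𝓝 (W1e (ν i) Q)) := by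
    simp only [← ofReal_W1 (hν i) (hμs _).1, ← ofReal_W1 (hν i) hQ, ← hci]
    exact ENNReal.tendsto_ofReal (hc i).1
  obtain ⟨ψ, hψ, hlim⟩ := exists_subseq_tendsto_W1e (hν i) hQ hPQ hconv
  refine ⟨φ ∘ ψ, hφ.comp hψ, Q, ⟨hQ, fun ρ hρ => ?_⟩,
    (ENNReal.tendsto_toReal ENNReal.zero_ne_top).comp hlim⟩
  exact (Finset.sum_le_sum fun i _ => hterm i).trans (hle ρ hρ)

end Medians

/-- Under convergence of the data `∑ᵢ |λᵢⁿ − λᵢ| + maxᵢ W₁(νᵢⁿ,νᵢ) → 0`,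
any sequence of medians `μⁿ ∈ Med_{λⁿ}(νⁿ)` admits a subsequence converging in `W₁`
distance to some `μ ∈ Med_λ(ν)`; in particular `Med_λ(ν)` is (sequentially) compact for
the `W₁` distance, and the set-valued map `(λ,ν) ↦ Med_λ(ν)` has a closed graph for the
`W₁` distance. -/
theorem medians_W1_compactness_and_stability
    {X : Type*} [MetricSpace X] [ProperSpace X] [MeasurableSpace X] [BorelSpace X]
    {N : ℕ} (hN : 1 ≤ N) [NeZero N]
    {l : Fin N → ℝ} (hl : memSimplex l) {ν : Fin N → Measure X} (hν : ∀ i, ν i ∈ P1 X)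
    {l' : ℕ → Fin N → ℝ} (hl' : ∀ n, memSimplex (l' n))
    {ν' : ℕ → Fin N → Measure X} (hν' : ∀ n i, ν' n i ∈ P1 X)
    (hconv : Tendsto
      (fun n => (∑ i, |l' n i - l i|) + ⨆ i, W1 (ν' n i) (ν i)) atTop (𝓝 0))
    (μs : ℕ → Measure X) (hμs : ∀ n, μs n ∈ Med (l' n) (ν' n)) :
    (∃ φ : ℕ → ℕ, StrictMono φ ∧ ∃ μ ∈ Med l ν,
        Tendsto (fun n => W1 (μs (φ n)) μ) atTop (𝓝 0)) ∧
    (∀ ρs : ℕ → Measure X, (∀ n, ρs n ∈ Med l ν) →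
        ∃ ψ : ℕ → ℕ, StrictMono ψ ∧ ∃ ρ ∈ Med l ν,
          Tendsto (fun n => W1 (ρs (ψ n)) ρ) atTop (𝓝 0)) ∧
    (∀ μ ∈ P1 X, Tendsto (fun n => W1 (μs n) μ) atTop (𝓝 0) → μ ∈ Med l ν) := by
  have hsum0 : ∀ n, 0 ≤ ∑ i, |l' n i - l i| := fun n => Finset.sum_nonneg fun i _ => abs_nonneg _
  have hsup : ∀ n i, W1 (ν' n i) (ν i) ≤ ⨆ i, W1 (ν' n i) (ν i) := fun n i =>
    le_ciSup (f := fun i => W1 (ν' n i) (ν i)) (Set.finite_range _).bddAbove i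
  have hlim : ∀ i, Tendsto (fun n => l' n i) atTop (𝓝 (l i)) := fun i => by
    refine tendsto_iff_dist_tendsto_zero.2 <|
      squeeze_zero (fun n => dist_nonneg) (fun n => ?_) hconv
    have h := Finset.single_le_sum (f := fun i => |l' n i - l i|) (fun i _ => abs_nonneg _)
      (Finset.mem_univ i)
    exact h.trans (le_add_of_nonneg_right ((W1_nonneg _ _).trans (hsup n i)))
  have hW : ∀ i, Tendsto (fun n => W1 (ν' n i) (ν i)) atTop (𝓝 0) := fun i =>
    squeeze_zero (fun n => W1_nonneg _ _)
      (fun n => (hsup n i).trans (le_add_of_nonneg_left (hsum0 n))) hconv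
  refine ⟨exists_subseq_tendsto_W1_mem_Med hl hν hl' hν' hμs hlim hW, fun ρs hρs => ?_,
    fun μ hμ h => ⟨hμ, fun ρ hρ => ?_⟩⟩
  · exact exists_subseq_tendsto_W1_mem_Med (l' := fun _ => l) (ν' := fun _ => ν) hl hν
      (fun _ => hl) (fun _ => hν) hρs (fun i => tendsto_const_nhds)
      fun i => by simp only [W1_self (hν i), tendsto_const_nhds]
  · refine sum_mul_le_medCost_of_tendsto hν hν' hμs hlim hW (fun i => ?_) hρ
    simp only [W1_comm (ν i)]
    exact tendsto_W1_of_tendsto (fun _ => hν i) (fun n => (hμs n).1) hμ h tendsto_const_nhds
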